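/- Let k ≥ 1 and let ρ₁, ρ₂ be permutations of [2k], each with all cycles of length exactly 2, such that ρ₂ ∘ ρ₁ has exactly two cycles, each of length k. Then there exists a subset C ⊆ [2k] with |C| = k such that ρ₁ maps C onto [2k] \ C and ρ₂ maps C onto [2k] \ C. -/

import Mathlib

/-!
Write `π = ρ₂ * ρ₁`. Since `ρ₁` and `ρ₂` are involutions, `ρ₁` conjugates `π` to `π⁻¹`. If `ρ₁ x`
were in the `π`-orbit of `x`, say `ρ₁ x = π ^ n x`, then the "midpoint" of `x` and `ρ₁ x` on the
orbit would yield a fixed point: for `n = m + m` the point `π ^ m x` is fixed by `ρ₁`, and for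
`n = 2 * m + 1` the point `ρ₁ (π ^ m x)` is fixed by `ρ₂` (`not_sameCycle_apply_left`). As
`ρ₂ x = π (ρ₁ x)`, the point `ρ₂ x` is not in the orbit of `x` either. So the support `C` of
either of the two cycles of `π` is sent by `ρ₁` and by `ρ₂` into its complement, and onto it
because `C` and its complement both have `k` elements.
-/

open Equiv.Perm

lemma sq_eq_one_of_cycleType {k : ℕ} {α : Type*} [Fintype α] [DecidableEq α]
    {ρ : Equiv.Perm α} (h : ρ.cycleType = Multiset.replicate k 2) : ρ * ρ = 1 := by
  rw [← pow_two, ← orderOf_dvd_iff_pow_eq_one, ← lcm_cycleType, h, Multiset.lcm_dvd]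
  intro b hb
  rw [Multiset.eq_of_mem_replicate hb]

lemma apply_ne_of_cycleType {k : ℕ} {ρ : Equiv.Perm (Fin (2 * k))}
    (h : ρ.cycleType = Multiset.replicate k 2) (x : Fin (2 * k)) : ρ x ≠ x := by
  have hs : ρ.support = Finset.univ := by
    rw [← Finset.card_eq_iff_eq_univ, ← sum_cycleType, h]
    simp [mul_comm]
  rw [← mem_support, hs]
  exact Finset.mem_univ x

/-- For fixed-point-free involutions `a` and `b`, the involution `a` moves every point to a
different orbit of `b * a`. -/
lemma not_sameCycle_apply_left {α : Type*} {a b : Equiv.Perm α} (ha : a * a = 1) (hb : b * b = 1)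
    (fa : ∀ x, a x ≠ x) (fb : ∀ x, b x ≠ x) (x : α) : ¬ (b * a).SameCycle x (a x) := by
  rintro ⟨n, hn⟩
  have hai : a⁻¹ = a := inv_eq_of_mul_eq_one_left ha
  have hbi : b⁻¹ = b := inv_eq_of_mul_eq_one_left hb
  have hconj : ∀ m : ℤ, a * (b * a) ^ m = (b * a) ^ (-m) * a := by
    intro m
    have h : SemiconjBy a (b * a) (b * a)⁻¹ := by
      rw [mul_inv_rev, hai, hbi]
      exact (mul_assoc a b a).symm
    have h' := (h.zpow_right m).eq
    rwa [inv_zpow'] at h'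
  -- The value of `a` at the midpoint candidate `(b * a) ^ m x`.
  have key : ∀ m : ℤ, a (((b * a) ^ m) x) = ((b * a) ^ (-m + n)) x := by
    intro m
    rw [← mul_apply, hconj, mul_apply, ← hn, ← mul_apply, ← zpow_add]
  rcases Int.even_or_odd' n with ⟨m, rfl | rfl⟩
  · apply fa (((b * a) ^ m) x)
    rw [key]
    congr 2
    ring
  · apply fb (a (((b * a) ^ m) x))
    have h := key m
    rw [show -m + (2 * m + 1) = 1 + m by ring, zpow_add, zpow_one, mul_apply, mul_apply] at h
    exact h.symm

lemma image_eq_compl_of_card {k : ℕ} {C : Finset (Fin (2 * k))} (hC : C.card = k)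
    (ρ : Equiv.Perm (Fin (2 * k))) (h : ∀ x ∈ C, ρ x ∉ C) : C.image (fun x => ρ x) = Cᶜ := by
  apply Finset.eq_of_subset_of_card_le
  · intro y hy
    obtain ⟨x, hx, rfl⟩ := Finset.mem_image.1 hy
    exact Finset.mem_compl.2 (h x hx)
  · rw [Finset.card_image_of_injective _ ρ.injective, Finset.card_compl, Fintype.card_fin, hC]
    omega

/-- Let `k ≥ 1` and let `ρ₁, ρ₂` be fixed-point-free involutions of `[2k]`
such that `ρ₂ ∘ ρ₁` has exactly two cycles, each of length `k`. Then there is a subset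
`C ⊆ [2k]` with `|C| = k` such that `ρ₁` maps `C` onto `[2k] \ C` and `ρ₂` maps `C`
onto `[2k] \ C`. -/
theorem stmt_7 (k : ℕ) (hk : 1 ≤ k) (ρ₁ ρ₂ : Equiv.Perm (Fin (2 * k)))
    (h₁ : ρ₁.cycleType = Multiset.replicate k 2)
    (h₂ : ρ₂.cycleType = Multiset.replicate k 2)
    (h₁₂ : (ρ₂ * ρ₁).cycleType = ({k, k} : Multiset ℕ)) :
    ∃ C : Finset (Fin (2 * k)), C.card = k ∧
      C.image (fun x => ρ₁ x) = Cᶜ ∧ C.image (fun x => ρ₂ x) = Cᶜ := by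
  have hmem : k ∈ (ρ₂ * ρ₁).cycleType := by simp [h₁₂]
  rw [cycleType_def, Multiset.mem_map] at hmem
  obtain ⟨c, hc, hcard⟩ := hmem
  have hc' : c ∈ (ρ₂ * ρ₁).cycleFactorsFinset := hc
  have hcard' : c.support.card = k := hcard
  have e₁ := sq_eq_one_of_cycleType h₁
  have e₂ := sq_eq_one_of_cycleType h₂
  have hnot := not_sameCycle_apply_left e₁ e₂ (apply_ne_of_cycleType h₁) (apply_ne_of_cycleType h₂)
  have hsame : ∀ x ∈ c.support, ∀ y ∈ c.support, (ρ₂ * ρ₁).SameCycle x y := by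
    intro x hx y hy
    rw [cycle_is_cycleOf hx hc', mem_support_cycleOf_iff] at hy
    exact hy.1
  refine ⟨c.support, hcard', image_eq_compl_of_card hcard' _ fun x hx hy => ?_,
    image_eq_compl_of_card hcard' _ fun x hx hy => ?_⟩
  · exact hnot x (hsame x hx _ hy)
  · have h := hsame x hx _ hy
    have e : ρ₂ x = (ρ₂ * ρ₁) (ρ₁ x) := by
      rw [mul_apply, ← mul_apply ρ₁ ρ₁, e₁, one_apply]
    rw [e, sameCycle_apply_right] at h
    exact hnot x h
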